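/- Let n be a positive integer. Then δ(m) < δ(n) holds for every composite positive integer m < n (i.e., every m < n that is neither 1 nor prime) if and only if either n = p or n = 2p for some prime p, or n ∈ {1, 8, 21}. -/

import Mathlib

/-- `staircaseDelta n` is the minimum of `r + s` over all pairs of positive
integers `(r, s)` with `r ≤ s` and `r * s = n`. -/
noncomputable def staircaseDelta (n : ℕ) : ℕ :=
  sInf {w : ℕ | ∃ r s : ℕ, 0 < r ∧ r ≤ s ∧ r * s = n ∧ w = r + s}

/-!
Composite numbers `m` satisfy `2 δ(m) ≤ m + 4`, with equality when `m = 2p`, so primes and their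
doubles beat everything below them. Conversely, any other composite `n ≠ 8` is a product of two
factors `≥ 3`, hence `3 δ(n) ≤ n + 9`; as `δ(2q) = q + 2`, any prime `q` with
`n / 3 < q < n / 2` gives a composite `m = 2q < n` with `δ(n) ≤ δ(m)`.

Such a prime exists by the following variant of Erdős' proof of Bertrand's postulate, due to
El Bachraoui. If there is no prime in `(2k + 1, 3k)`, then every prime `p > √(3k)` other than
`2k + 1` divides `(3k choose k)` at most as often as it divides
`(k / 2)# * (3k / 2 choose k / 2) ≤ 3 ^ (3k / 2)`. Hence `(3k choose k)`, which grows like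
`(27 / 4) ^ k`, is at most `(3k) ^ (√(3k) + 1) * 27 ^ (k / 2)`, which is absurd for large `k`.
-/

section BinomialBounds

theorem choose_mul_pow_mul_pow_le (x y n k : ℕ) :
    n.choose k * (x ^ k * y ^ (n - k)) ≤ (x + y) ^ n := by
  rcases lt_or_ge n k with hnk | hkn
  · simp [Nat.choose_eq_zero_of_lt hnk]
  · rw [add_pow, mul_comm]
    exact Finset.single_le_sum (f := fun j ↦ x ^ j * y ^ (n - j) * n.choose j)
      (fun _ _ ↦ Nat.zero_le _) (Finset.mem_range_succ_iff.mpr hkn)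

theorem choose_three_mul_succ (n : ℕ) :
    (3 * (n + 1)).choose (n + 1) * (2 * (n + 1) * (2 * n + 1)) =
      (3 * n).choose n * (3 * (3 * n + 1) * (3 * n + 2)) := by
  have h₁ := Nat.choose_mul_succ_eq (3 * n) n
  have h₂ := Nat.choose_mul_succ_eq (3 * n + 1) n
  have h₃ := Nat.add_one_mul_choose_eq (3 * n + 2) n
  rw [show 3 * n + 1 - n = 2 * n + 1 by omega] at h₁
  rw [show 3 * n + 1 + 1 - n = 2 * n + 2 by omega] at h₂
  rw [show 3 * (n + 1) = 3 * n + 2 + 1 by ring]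
  linear_combination (4 * n + 2) * h₃.symm + (6 * n + 3) * h₂.symm + (9 * n + 6) * h₁.symm

theorem pow_le_mul_choose_three_mul (n : ℕ) :
    27 ^ n ≤ (3 * n + 1) * ((3 * n).choose n * 4 ^ n) := by
  induction n with
  | zero => simp
  | succ n ih =>
    refine Nat.le_of_mul_le_mul_left ?_ (show 0 < 2 * (n + 1) * (2 * n + 1) by positivity)
    calc 2 * (n + 1) * (2 * n + 1) * 27 ^ (n + 1)
        = 54 * (n + 1) * (2 * n + 1) * 27 ^ n := by ring
      _ ≤ 54 * (n + 1) * (2 * n + 1) * ((3 * n + 1) * ((3 * n).choose n * 4 ^ n)) := by gcongr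
      _ ≤ 12 * (3 * n + 4) * (3 * n + 2) * ((3 * n + 1) * ((3 * n).choose n * 4 ^ n)) := by
          gcongr ?_ * _
          nlinarith
      _ = (3 * n + 4) * 4 ^ (n + 1) * ((3 * n).choose n * (3 * (3 * n + 1) * (3 * n + 2))) := by
          ring
      _ = 2 * (n + 1) * (2 * n + 1) *
            ((3 * (n + 1) + 1) * ((3 * (n + 1)).choose (n + 1) * 4 ^ (n + 1))) := by
          rw [← choose_three_mul_succ]; ring

theorem primorial_mul_choose_half_le (k : ℕ) :
    primorial (k / 2) * (3 * k / 2).choose (k / 2) ≤ 3 ^ (3 * k / 2) :=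
  calc primorial (k / 2) * (3 * k / 2).choose (k / 2)
      ≤ 2 ^ k * (3 * k / 2).choose (k / 2) := by
        gcongr
        calc primorial (k / 2) ≤ 4 ^ (k / 2) := primorial_le_four_pow _
          _ = 2 ^ (2 * (k / 2)) := by rw [pow_mul]; norm_num
          _ ≤ 2 ^ k := by gcongr <;> omega
    _ = (3 * k / 2).choose (k / 2) * (1 ^ (k / 2) * 2 ^ (3 * k / 2 - k / 2)) := by
        rw [show 3 * k / 2 - k / 2 = k by omega, one_pow, one_mul, mul_comm]
    _ ≤ 3 ^ (3 * k / 2) := choose_mul_pow_mul_pow_le 1 2 _ _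

end BinomialBounds

section ChooseFactorization

theorem factorization_choose_add_of_lt_sq {p a b : ℕ} (hp : p.Prime) (h : a + b < p ^ 2) :
    ((a + b).choose b).factorization p = if p ≤ b % p + a % p then 1 else 0 := by
  rw [Nat.factorization_choose' hp (Nat.log_lt_of_lt_pow' two_ne_zero h), Nat.Ico_succ_singleton]
  simp [Finset.filter_singleton, apply_ite]

theorem choose_le_pow_card_mul {n k d : ℕ} (hn : 0 < n) (hd : d ≠ 0) (T : Finset ℕ)
    (h : ∀ p, p.Prime → p ∉ T → (n.choose k).factorization p ≤ d.factorization p) :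
    n.choose k ≤ n ^ T.card * d := by
  rcases eq_or_ne (n.choose k) 0 with h0 | h0
  · simp [h0]
  set f : ℕ → ℕ := fun p ↦ p ^ (n.choose k).factorization p
  have hf : ∀ p, f p ≠ 0 := fun p ↦ by
    rcases eq_or_ne p 0 with rfl | hp
    · simp [f]
    · positivity
  have hprod : ∏ p ∈ T, f p ≠ 0 := Finset.prod_ne_zero_iff.mpr fun p _ ↦ hf p
  have hdvd : n.choose k ∣ (∏ p ∈ T, f p) * d := by
    rw [← Nat.factorization_prime_le_iff_dvd h0 (mul_ne_zero hprod hd)]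
    intro p hp
    rw [Nat.factorization_mul hprod hd, Finsupp.add_apply]
    by_cases hpT : p ∈ T
    · exact le_add_right ((hp.pow_dvd_iff_le_factorization hprod).mp (Finset.dvd_prod_of_mem f hpT))
    · exact le_add_left (h p hp hpT)
  calc n.choose k ≤ (∏ p ∈ T, f p) * d := Nat.le_of_dvd (by positivity) hdvd
    _ ≤ n ^ T.card * d := by
        gcongr
        exact Finset.prod_le_pow_card _ _ _ fun p _ ↦ Nat.pow_factorization_choose_le hn

-- A carry in the base `p` addition `k + 2 * k` forces one in `k / 2 + k`.
theorem le_half_mod_add_mod_of_le_mod_add_two_mul_mod {k p : ℕ} (hpk : k / 2 < p) (hp2 : p ≤ 2 * k)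
    (h : p ≤ k % p + (2 * k) % p) : p ≤ (k / 2) % p + k % p := by
  rw [Nat.mod_eq_of_lt hpk]
  rcases lt_or_ge k p with hkp | hkp
  · rw [Nat.mod_eq_of_lt hkp, Nat.mod_eq_sub_mod hp2, Nat.mod_eq_of_lt (by omega)] at h
    rw [Nat.mod_eq_of_lt hkp]
    omega
  · have htwo : (2 * k) % p ≤ 2 * (k - p) := by
      rw [Nat.mod_eq_sub_mod hp2, Nat.mod_eq_sub_mod (by omega)]
      exact (Nat.mod_le _ _).trans (by omega)
    rw [Nat.mod_eq_sub_mod hkp, Nat.mod_eq_of_lt (by omega)] at h ⊢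
    omega

theorem factorization_choose_three_mul_le {k p : ℕ} (hp : p.Prime) (hsq : 3 * k < p ^ 2)
    (hrange : p ≤ 2 * k ∨ 3 * k < p) :
    ((3 * k).choose k).factorization p ≤
      (primorial (k / 2) * (3 * k / 2).choose (k / 2)).factorization p := by
  have hchoose : (3 * k / 2).choose (k / 2) ≠ 0 := Nat.choose_ne_zero (by omega)
  rw [Nat.factorization_mul (primorial_ne_zero _) hchoose, Finsupp.add_apply]
  rcases le_or_gt p (k / 2) with hpk | hpk
  · calc ((3 * k).choose k).factorization p ≤ 1 := Nat.factorization_choose_le_one hsq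
      _ ≤ (primorial (k / 2)).factorization p :=
        hp.factorization_pos_of_dvd (primorial_ne_zero _) (hp.dvd_primorial_iff.mpr hpk)
      _ ≤ _ := Nat.le_add_right _ _
  rcases hrange with hp2 | hp3
  · refine le_add_left ?_
    rw [show 3 * k = 2 * k + k by ring, factorization_choose_add_of_lt_sq hp (by omega),
      show (2 * k + k) / 2 = k + k / 2 by omega, factorization_choose_add_of_lt_sq hp (by omega)]
    have hcarry := le_half_mod_add_mod_of_le_mod_add_two_mul_mod hpk hp2
    split_ifs <;> grind
  · simp [Nat.factorization_choose_eq_zero_of_lt hp3]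

end ChooseFactorization

section PrimeBetween

theorem choose_three_mul_le {k : ℕ} (hk : 0 < k)
    (hno : ∀ p, p.Prime → 2 * k + 1 < p → 3 * k < p) :
    (3 * k).choose k ≤ (3 * k) ^ (Nat.sqrt (3 * k) + 1) * 3 ^ (3 * k / 2) := by
  set T := insert (2 * k + 1) (Finset.Icc 1 (Nat.sqrt (3 * k))) with hT
  have hcard : T.card ≤ Nat.sqrt (3 * k) + 1 :=
    (Finset.card_insert_le _ _).trans_eq (by rw [Nat.card_Icc, Nat.add_sub_cancel])
  calc (3 * k).choose k
      ≤ (3 * k) ^ T.card * (primorial (k / 2) * (3 * k / 2).choose (k / 2)) := by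
        refine choose_le_pow_card_mul (by positivity)
          (mul_ne_zero (primorial_ne_zero _) (Nat.choose_ne_zero (by omega))) T fun p hp hpT ↦ ?_
        rw [hT, Finset.mem_insert, Finset.mem_Icc, not_or, not_and, not_le] at hpT
        refine factorization_choose_three_mul_le hp (Nat.sqrt_lt'.mp (hpT.2 hp.one_le)) ?_
        have := hno p hp
        omega
    _ ≤ (3 * k) ^ (Nat.sqrt (3 * k) + 1) * 3 ^ (3 * k / 2) := by
        gcongr
        · omega
        · exact primorial_mul_choose_half_le k

theorem pow_le_of_no_prime {k : ℕ} (hk : 0 < k)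
    (hno : ∀ p, p.Prime → 2 * k + 1 < p → 3 * k < p) :
    27 ^ k ≤ (3 * k + 1) ^ (2 * (Nat.sqrt (3 * k) + 2)) * 16 ^ k := by
  set s := Nat.sqrt (3 * k)
  have hroot : 27 ^ k ≤ (3 * k + 1) ^ (s + 2) * 4 ^ k * 3 ^ (3 * k / 2) :=
    calc 27 ^ k ≤ (3 * k + 1) * ((3 * k).choose k * 4 ^ k) := pow_le_mul_choose_three_mul k
      _ ≤ (3 * k + 1) * ((3 * k) ^ (s + 1) * 3 ^ (3 * k / 2) * 4 ^ k) := by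
          gcongr
          exact choose_three_mul_le hk hno
      _ ≤ (3 * k + 1) * ((3 * k + 1) ^ (s + 1) * 3 ^ (3 * k / 2) * 4 ^ k) := by
          gcongr
          omega
      _ = (3 * k + 1) ^ (s + 2) * 4 ^ k * 3 ^ (3 * k / 2) := by ring
  refine Nat.le_of_mul_le_mul_right ?_ (show 0 < 27 ^ k by positivity)
  calc 27 ^ k * 27 ^ k
      ≤ ((3 * k + 1) ^ (s + 2) * 4 ^ k * 3 ^ (3 * k / 2)) ^ 2 := by
        rw [← sq]
        gcongr
    _ = (3 * k + 1) ^ (2 * (s + 2)) * 4 ^ (2 * k) * 3 ^ (2 * (3 * k / 2)) := by ring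
    _ ≤ (3 * k + 1) ^ (2 * (s + 2)) * 4 ^ (2 * k) * 3 ^ (3 * k) :=
        Nat.mul_le_mul_left _ (Nat.pow_le_pow_right three_pos (by omega))
    _ = (3 * k + 1) ^ (2 * (s + 2)) * 16 ^ k * 27 ^ k := by rw [pow_mul 3, pow_mul 4]; norm_num

theorem seventeen_mul_log_two_succ_le {s : ℕ} (hs : 256 ≤ s) : 17 * (Nat.log 2 s + 1) ≤ s := by
  have hlog : 8 ≤ Nat.log 2 s := Nat.le_log_of_pow_le one_lt_two hs
  have hpow : ∀ t, 8 ≤ t → 17 * (t + 1) ≤ 2 ^ t := fun t ht ↦ by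
    induction t, ht using Nat.le_induction with
    | base => norm_num
    | succ t _ ih => rw [pow_succ]; omega
  exact (hpow _ hlog).trans (Nat.pow_log_le_self 2 (by omega))

theorem sqrt_three_mul_lt_of_pow_le {k : ℕ}
    (h : 27 ^ k ≤ (3 * k + 1) ^ (2 * (Nat.sqrt (3 * k) + 2)) * 16 ^ k) :
    Nat.sqrt (3 * k) < 256 := by
  by_contra! hs
  have hsq : Nat.sqrt (3 * k) ^ 2 ≤ 3 * k := Nat.sqrt_le' _
  have hlt : 3 * k + 1 ≤ (Nat.sqrt (3 * k) + 1) ^ 2 := Nat.lt_succ_sqrt' _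
  set s := Nat.sqrt (3 * k)
  set t := Nat.log 2 s + 1
  have hst : 17 * t ≤ s := seventeen_mul_log_two_succ_le hs
  have hs_pow : s + 1 ≤ 2 ^ t := Nat.lt_pow_succ_log_self one_lt_two s
  -- The fourth power of `27 / 16` exceeds `2 ^ 3`.
  have hexp : 2 ^ (3 * k) ≤ 2 ^ (16 * (s + 2) * t) := by
    refine Nat.le_of_mul_le_mul_right ?_ (show 0 < (16 ^ k) ^ 4 by positivity)
    calc 2 ^ (3 * k) * (16 ^ k) ^ 4 = (2 ^ 3 * 16 ^ 4) ^ k := by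
          rw [pow_mul, mul_pow, pow_right_comm 16]
      _ ≤ (27 ^ 4) ^ k := by gcongr; norm_num
      _ = (27 ^ k) ^ 4 := pow_right_comm _ _ _
      _ ≤ ((((2 ^ t) ^ 2) ^ (2 * (s + 2))) * 16 ^ k) ^ 4 := by
          gcongr
          refine h.trans ?_
          gcongr
          exact hlt.trans (by gcongr)
      _ = 2 ^ (16 * (s + 2) * t) * (16 ^ k) ^ 4 := by
          rw [mul_pow]; simp only [← pow_mul]; congr 2; ring
  have : 3 * k ≤ 16 * (s + 2) * t := (Nat.pow_le_pow_iff_right one_lt_two).mp hexp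
  nlinarith

theorem exists_prime_two_mul_add_one_lt_lt_three_mul {k : ℕ} (hk : 21846 ≤ k) :
    ∃ p, p.Prime ∧ 2 * k + 1 < p ∧ p < 3 * k := by
  by_contra! hno
  have hlt : Nat.sqrt (3 * k) < 256 := by
    refine sqrt_three_mul_lt_of_pow_le (pow_le_of_no_prime (by omega) fun p hp hkp ↦ ?_)
    refine (hno p hp hkp).lt_of_ne ?_
    rintro rfl
    exact Nat.not_prime_mul (by norm_num) (by omega) hp
  rw [Nat.sqrt_lt'] at hlt
  omega

theorem exists_mem_lt_two_mul_lt_of_isChain {a x : ℕ} {l : List ℕ}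
    (hl : (a :: l).IsChain fun p q ↦ 2 * q < 3 * p) (ha : a ≤ x) (hx : ∃ b ∈ l, x < b) :
    ∃ q ∈ l, x < q ∧ 2 * q < 3 * x := by
  induction l generalizing a with
  | nil => simp at hx
  | cons b l ih =>
    obtain ⟨hab, hbl⟩ := List.isChain_cons_cons.mp hl
    rcases lt_or_ge x b with hxb | hbx
    · exact ⟨b, List.mem_cons_self, hxb, by omega⟩
    · have hx' : ∃ c ∈ l, x < c := by
        obtain ⟨c, hc, hxc⟩ := hx
        exact ⟨c, (List.mem_cons.mp hc).resolve_left (by omega), hxc⟩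
      obtain ⟨q, hq, hlt⟩ := ih hbl hbx hx'
      exact ⟨q, List.mem_cons_of_mem _ hq, hlt⟩

theorem exists_prime_lt_two_mul_lt_three_mul {x : ℕ} (hx : 8 ≤ x) :
    ∃ q, q.Prime ∧ x < q ∧ 2 * q < 3 * x := by
  rcases lt_or_ge x 43692 with hsmall | hlarge
  · let primes : List ℕ := [11, 13, 19, 23, 31, 43, 61, 89, 131, 193, 283, 421, 631, 941, 1409,
      2113, 3169, 4751, 7121, 10667, 15991, 23981, 35969, 53951]
    have hprimes : ∀ q ∈ primes, q.Prime := by simp only [primes, List.forall_mem_cons]; norm_num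
    obtain ⟨q, hq, hlt⟩ := exists_mem_lt_two_mul_lt_of_isChain (l := primes)
      (by decide) hx ⟨53951, by decide, by omega⟩
    exact ⟨q, hprimes q hq, hlt⟩
  · obtain ⟨q, hq, hlt, hgt⟩ :=
      exists_prime_two_mul_add_one_lt_lt_three_mul (k := x / 2) (by omega)
    exact ⟨q, hq, by omega, by omega⟩

end PrimeBetween

section StaircaseDelta

theorem staircaseDelta_mul_le {r s : ℕ} (hr : 0 < r) (hs : 0 < s) :
    staircaseDelta (r * s) ≤ r + s := by
  wlog hrs : r ≤ s generalizing r s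
  · rw [mul_comm, add_comm]
    exact this hs hr (by omega)
  · exact Nat.sInf_le ⟨r, s, hr, hrs, rfl, rfl⟩

theorem exists_mul_eq_staircaseDelta_eq {n : ℕ} (hn : 0 < n) :
    ∃ r s : ℕ, r ≤ s ∧ r * s = n ∧ staircaseDelta n = r + s := by
  obtain ⟨r, s, -, h⟩ := Nat.sInf_mem
    (s := {w : ℕ | ∃ r s : ℕ, 0 < r ∧ r ≤ s ∧ r * s = n ∧ w = r + s})
    ⟨1 + n, 1, n, one_pos, hn, one_mul n, rfl⟩
  exact ⟨r, s, h⟩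

theorem four_mul_le_staircaseDelta_sq {n : ℕ} (hn : 0 < n) : 4 * n ≤ staircaseDelta n ^ 2 := by
  obtain ⟨r, s, -, rfl, hδ⟩ := exists_mul_eq_staircaseDelta_eq hn
  rw [hδ, ← mul_assoc]
  exact four_mul_le_sq_add r s

theorem mul_staircaseDelta_mul_le {a b c : ℕ} (hc : 0 < c) (ha : c ≤ a) (hb : c ≤ b) :
    c * staircaseDelta (a * b) ≤ a * b + c ^ 2 := by
  have hδ := staircaseDelta_mul_le (hc.trans_le ha) (hc.trans_le hb)
  obtain ⟨a, rfl⟩ := Nat.exists_eq_add_of_le ha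
  obtain ⟨b, rfl⟩ := Nat.exists_eq_add_of_le hb
  nlinarith

theorem staircaseDelta_mul_prime {k p : ℕ} (hk : 0 < k) (hkp : k ≤ p) (hp : p.Prime) :
    staircaseDelta (k * p) = k + p := by
  refine (staircaseDelta_mul_le hk hp.pos).antisymm ?_
  obtain ⟨r, s, -, hrs, hδ⟩ := exists_mul_eq_staircaseDelta_eq (Nat.mul_pos hk hp.pos)
  have hcofactor : ∀ c d, c * p * d = k * p → k + p ≤ c * p + d := by
    intro c d h
    have hcd : c * d = k := Nat.eq_of_mul_eq_mul_right hp.pos (by rw [← h]; ring)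
    have hc : 0 < c := Nat.pos_of_ne_zero (by rintro rfl; omega)
    have hdp : d ≤ p := (Nat.le_of_dvd hk ⟨c, by rw [← hcd, mul_comm]⟩).trans hkp
    nlinarith
  rw [hδ]
  rcases hp.dvd_mul.mp ⟨k, by rw [hrs, mul_comm]⟩ with ⟨c, rfl⟩ | ⟨c, rfl⟩
  · rw [mul_comm p c]
    exact hcofactor c s (by rw [← hrs]; ring)
  · rw [mul_comm p c, add_comm r]
    exact hcofactor c r (by rw [← hrs]; ring)

end StaircaseDelta

section Composite

theorem exists_two_le_mul_eq {n : ℕ} (hn : 0 < n) (h1 : n ≠ 1) (hp : ¬ n.Prime) :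
    ∃ a b, 2 ≤ a ∧ 2 ≤ b ∧ a * b = n := by
  obtain ⟨a, b, ha, hb, rfl⟩ := (Nat.not_prime_iff_exists_mul_eq (by omega)).mp hp
  exact ⟨a, b, by nlinarith, by nlinarith, rfl⟩

theorem exists_three_le_mul_eq {n : ℕ} (hn : 0 < n) (h1 : n ≠ 1) (hp : ¬ n.Prime)
    (h2p : ∀ p, p.Prime → n ≠ 2 * p) (h8 : n ≠ 8) :
    ∃ a b, 3 ≤ a ∧ 3 ≤ b ∧ a * b = n := by
  have two_mul_case : ∀ b, 2 ≤ b → n = 2 * b → ∃ a b, 3 ≤ a ∧ 3 ≤ b ∧ a * b = n := by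
    rintro b hb rfl
    obtain ⟨c, d, hc, hd, rfl⟩ :=
      exists_two_le_mul_eq (by omega) (by omega) fun hbp ↦ h2p b hbp rfl
    rcases hd.eq_or_lt with rfl | hd3
    · exact ⟨4, c, by omega, by omega, by ring⟩
    · exact ⟨2 * c, d, by omega, hd3, by ring⟩
  obtain ⟨a, b, ha, hb, hab⟩ := exists_two_le_mul_eq hn h1 hp
  rcases ha.eq_or_lt with rfl | ha3
  · exact two_mul_case b hb hab.symm
  rcases hb.eq_or_lt with rfl | hb3
  · exact two_mul_case a ha (by rw [← hab, mul_comm])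
  · exact ⟨a, b, ha3, hb3, hab⟩

theorem two_mul_staircaseDelta_le {n : ℕ} (hn : 0 < n) (h1 : n ≠ 1) (hp : ¬ n.Prime) :
    2 * staircaseDelta n ≤ n + 4 := by
  obtain ⟨a, b, ha, hb, rfl⟩ := exists_two_le_mul_eq hn h1 hp
  exact mul_staircaseDelta_mul_le two_pos ha hb

theorem three_mul_staircaseDelta_le {n : ℕ} (hn : 0 < n) (h1 : n ≠ 1) (hp : ¬ n.Prime)
    (h2p : ∀ p, p.Prime → n ≠ 2 * p) (h8 : n ≠ 8) :
    3 * staircaseDelta n ≤ n + 9 := by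
  obtain ⟨a, b, ha, hb, rfl⟩ := exists_three_le_mul_eq hn h1 hp h2p h8
  exact mul_staircaseDelta_mul_le three_pos ha hb

theorem exists_prime_lt_three_mul_two_mul_lt {n : ℕ} (hn : 0 < n) (h1 : n ≠ 1) (hp : ¬ n.Prime)
    (h2p : ∀ p, p.Prime → n ≠ 2 * p) (h8 : n ≠ 8) (h9 : n ≠ 9) (h21 : n ≠ 21) :
    ∃ q, q.Prime ∧ n < 3 * q ∧ 2 * q < n := by
  rcases lt_or_ge n 24 with hsmall | hlarge
  · have h4 := h2p 2 (by norm_num)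
    have h6 := h2p 3 (by norm_num)
    have h10 := h2p 5 (by norm_num)
    have h14 := h2p 7 (by norm_num)
    have h22 := h2p 11 (by norm_num)
    interval_cases n <;> first
      | omega
      | (norm_num at hp; done)
      | (use 5; norm_num; done)
      | (use 7; norm_num)
  · obtain ⟨q, hq, hlt, hgt⟩ := exists_prime_lt_two_mul_lt_three_mul (x := n / 3) (by omega)
    exact ⟨q, hq, by omega, by omega⟩

theorem six_le_staircaseDelta_eight : 6 ≤ staircaseDelta 8 := by
  have := four_mul_le_staircaseDelta_sq (n := 8) (by norm_num)
  nlinarith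

theorem exists_composite_lt_staircaseDelta_le {n : ℕ} (hn : 0 < n) (h1 : n ≠ 1) (hp : ¬ n.Prime)
    (h2p : ∀ p, p.Prime → n ≠ 2 * p) (h8 : n ≠ 8) (h21 : n ≠ 21) :
    ∃ m, 0 < m ∧ m < n ∧ m ≠ 1 ∧ ¬ m.Prime ∧ staircaseDelta n ≤ staircaseDelta m := by
  have hδ := three_mul_staircaseDelta_le hn h1 hp h2p h8
  rcases eq_or_ne n 9 with rfl | h9
  · have := six_le_staircaseDelta_eight
    exact ⟨8, by norm_num, by norm_num, by norm_num, by norm_num, by omega⟩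
  · obtain ⟨q, hq, hlt, hgt⟩ := exists_prime_lt_three_mul_two_mul_lt hn h1 hp h2p h8 h9 h21
    have hδ_two_mul := staircaseDelta_mul_prime two_pos hq.two_le hq
    exact ⟨2 * q, by have := hq.pos; omega, hgt, by omega,
      Nat.not_prime_mul (by norm_num) hq.ne_one, by omega⟩

theorem staircaseDelta_lt_of_lt_prime {m p : ℕ} (hp : p.Prime) (hm : 0 < m) (hmp : m < p)
    (h1 : m ≠ 1) (hm' : ¬ m.Prime) : staircaseDelta m < staircaseDelta p := by
  have hδm := two_mul_staircaseDelta_le hm h1 hm'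
  have hδp := staircaseDelta_mul_prime one_pos hp.one_le hp
  rw [one_mul] at hδp
  have := hp.two_le
  omega

theorem staircaseDelta_lt_of_lt_two_mul_prime {m p : ℕ} (hp : p.Prime) (hm : 0 < m)
    (hmp : m < 2 * p) (h1 : m ≠ 1) (hm' : ¬ m.Prime) :
    staircaseDelta m < staircaseDelta (2 * p) := by
  have hδm := two_mul_staircaseDelta_le hm h1 hm'
  have hδp := staircaseDelta_mul_prime two_pos hp.two_le hp
  omega

theorem staircaseDelta_lt_of_lt_eight {m : ℕ} (hm : 0 < m) (hm8 : m < 8) (h1 : m ≠ 1)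
    (hm' : ¬ m.Prime) : staircaseDelta m < staircaseDelta 8 := by
  have hδm := two_mul_staircaseDelta_le hm h1 hm'
  have hδ8 := six_le_staircaseDelta_eight
  have : m ≠ 7 := by
    rintro rfl
    exact hm' (by norm_num)
  omega

theorem staircaseDelta_lt_of_lt_twenty_one {m : ℕ} (hm : 0 < m) (hm21 : m < 21) (h1 : m ≠ 1)
    (hm' : ¬ m.Prime) : staircaseDelta m < staircaseDelta 21 := by
  have hδ21 : staircaseDelta 21 = 3 + 7 :=
    staircaseDelta_mul_prime (p := 7) three_pos (by norm_num) (by norm_num)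
  rw [hδ21]
  by_cases h2p : ∃ p, p.Prime ∧ m = 2 * p
  · obtain ⟨p, hp, rfl⟩ := h2p
    rw [staircaseDelta_mul_prime two_pos hp.two_le hp]
    have hp7 : p ≤ 7 := by
      by_contra! hp7
      have : p ≤ 10 := by omega
      interval_cases p <;> revert hp <;> norm_num
    omega
  · push Not at h2p
    rcases eq_or_ne m 8 with rfl | h8
    · have := two_mul_staircaseDelta_le hm h1 hm'
      omega
    · have := three_mul_staircaseDelta_le hm h1 hm' h2p h8
      omega

end Composite

/-- For a positive integer `n`, `δ(m) < δ(n)` for every composite `m < n` iff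
`n = p` or `n = 2p` for some prime `p`, or `n ∈ {1, 8, 21}`. -/
theorem stmt11 (n : ℕ) (hn : 0 < n) :
    (∀ m : ℕ, 0 < m → m < n → m ≠ 1 → ¬Nat.Prime m →
        staircaseDelta m < staircaseDelta n) ↔
      (∃ p : ℕ, Nat.Prime p ∧ (n = p ∨ n = 2 * p)) ∨ n ∈ ({1, 8, 21} : Set ℕ) := by
  constructor
  · intro h
    by_contra! hcon
    simp only [Set.mem_insert_iff, Set.mem_singleton_iff, not_or] at hcon
    obtain ⟨hprime, h1, h8, h21⟩ := hcon
    obtain ⟨m, hm, hmn, hm1, hm', hδ⟩ := exists_composite_lt_staircaseDelta_le hn h1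
      (fun hp ↦ (hprime n hp).1 rfl) (fun p hp ↦ (hprime p hp).2) h8 h21
    exact (h m hm hmn hm1 hm').not_ge hδ
  · rintro (⟨p, hp, rfl | rfl⟩ | rfl | rfl | rfl) m hm hmn hm1 hm'
    · exact staircaseDelta_lt_of_lt_prime hp hm hmn hm1 hm'
    · exact staircaseDelta_lt_of_lt_two_mul_prime hp hm hmn hm1 hm'
    · omega
    · exact staircaseDelta_lt_of_lt_eight hm hmn hm1 hm'
    · exact staircaseDelta_lt_of_lt_twenty_one hm hmn hm1 hm'
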